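/- Let Ω = {(x₁,x₂) ∈ ℝ² : 0 < x₂ < x₁ < h} be an isosceles right triangle with legs of length h > 0, and let Γ = {x₁ = h, x₂ ∈ [0,h]} ∪ {x₂ = 0, x₁ ∈ [0,h]} be the union of the two legs. Let z₀ be the unique root of the equation tanh(z)·tan(z) = 1 in the interval (0, π/2) (z₀ ≈ 0.93755). Then the sharp constant C₂(Ω,Γ) in the inequality ‖w‖_{L²(Γ)} ≤ C₂‖∇w‖_{L²(Ω)} for all w ∈ H̃¹(Ω,Γ) is equal to ( (2z₀/h)·tanh(z₀) )^{-1/2}. -/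

import Mathlib

open MeasureTheory Real

lemma box_div (P Q : ℝ × ℝ → ℝ) (p1 p2 : ℝ × ℝ → ℝ)
    (hP : ∀ p ∈ Set.Icc ((0, -1) : ℝ × ℝ) (1, 1), ContDiffAt ℝ 1 P p)
    (hQ : ∀ p ∈ Set.Icc ((0, -1) : ℝ × ℝ) (1, 1), ContDiffAt ℝ 1 Q p)
    (h1 : ∀ p ∈ Set.Icc ((0, -1) : ℝ × ℝ) (1, 1), HasDerivAt (fun s => P (s, p.2)) (p1 p) p.1)
    (h2 : ∀ p ∈ Set.Icc ((0, -1) : ℝ × ℝ) (1, 1), HasDerivAt (fun t => Q (p.1, t)) (p2 p) p.2) :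
    IntegrableOn (fun p => p1 p + p2 p) (Set.Icc ((0, -1) : ℝ × ℝ) (1, 1)) ∧
    ∫ p in Set.Icc ((0, -1) : ℝ × ℝ) (1, 1), (p1 p + p2 p) =
      (((∫ s in (0:ℝ)..1, Q (s, 1)) - ∫ s in (0:ℝ)..1, Q (s, -1)) +
        ∫ t in (-1:ℝ)..1, P (1, t)) - ∫ t in (-1:ℝ)..1, P (0, t) := by
  have e1 : ∀ p ∈ Set.Icc ((0, -1) : ℝ × ℝ) (1, 1), p1 p = fderiv ℝ P p (1, 0) := by
    intro p hp
    have hd : HasFDerivAt P (fderiv ℝ P p) (p.1, p.2) :=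
      ((hP p hp).differentiableAt (by norm_num)).hasFDerivAt
    have hc : HasDerivAt (fun s : ℝ => (s, p.2)) ((1 : ℝ), (0 : ℝ)) p.1 :=
      (hasDerivAt_id _).prodMk (hasDerivAt_const _ _)
    exact (h1 p hp).unique (hd.comp_hasDerivAt p.1 hc)
  have e2 : ∀ p ∈ Set.Icc ((0, -1) : ℝ × ℝ) (1, 1), p2 p = fderiv ℝ Q p (0, 1) := by
    intro p hp
    have hd : HasFDerivAt Q (fderiv ℝ Q p) (p.1, p.2) :=
      ((hQ p hp).differentiableAt (by norm_num)).hasFDerivAt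
    have hc : HasDerivAt (fun t : ℝ => (p.1, t)) ((0 : ℝ), (1 : ℝ)) p.2 :=
      (hasDerivAt_const _ _).prodMk (hasDerivAt_id _)
    exact (h2 p hp).unique (hd.comp_hasDerivAt p.2 hc)
  have e3 : Set.EqOn (fun p => p1 p + p2 p) (fun p => fderiv ℝ P p (1, 0) + fderiv ℝ Q p (0, 1))
      (Set.Icc ((0, -1) : ℝ × ℝ) (1, 1)) := fun p hp => by
    simp only [e1 p hp, e2 p hp]
  have hi : IntegrableOn (fun p => fderiv ℝ P p (1, 0) + fderiv ℝ Q p (0, 1))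
      (Set.Icc ((0, -1) : ℝ × ℝ) (1, 1)) := by
    apply ContinuousOn.integrableOn_compact isCompact_Icc
    intro p hp
    apply ContinuousAt.continuousWithinAt
    have := (hP p hp).continuousAt_fderiv (by norm_num)
    have := (hQ p hp).continuousAt_fderiv (by norm_num)
    fun_prop
  refine ⟨hi.congr_fun e3.symm measurableSet_Icc, ?_⟩
  rw [setIntegral_congr_fun measurableSet_Icc e3]
  refine integral_divergence_prod_Icc_of_hasFDerivAt_off_countable_of_le P Q (fderiv ℝ P)
    (fderiv ℝ Q) (0, -1) (1, 1) (by constructor <;> norm_num) ∅ Set.countable_empty ?_ ?_ ?_ ?_ hi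
  · exact fun p hp => (hP p hp).continuousAt.continuousWithinAt
  · exact fun p hp => (hQ p hp).continuousAt.continuousWithinAt
  · intro p hp
    have hp' : p ∈ Set.Icc ((0, -1) : ℝ × ℝ) (1, 1) :=
      ⟨⟨hp.1.1.1.le, hp.1.2.1.le⟩, ⟨hp.1.1.2.le, hp.1.2.2.le⟩⟩
    exact ((hP p hp').differentiableAt (by norm_num)).hasFDerivAt
  · intro p hp
    have hp' : p ∈ Set.Icc ((0, -1) : ℝ × ℝ) (1, 1) :=
      ⟨⟨hp.1.1.1.le, hp.1.2.1.le⟩, ⟨hp.1.1.2.le, hp.1.2.2.le⟩⟩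
    exact ((hQ p hp').differentiableAt (by norm_num)).hasFDerivAt

/-- the reference box -/
abbrev BX : Set (ℝ × ℝ) := Set.Icc ((0, -1) : ℝ × ℝ) (1, 1)

lemma mem_BX {p : ℝ × ℝ} (hp : p ∈ BX) : 0 ≤ p.1 ∧ p.1 ≤ 1 ∧ -1 ≤ p.2 ∧ p.2 ≤ 1 :=
  ⟨hp.1.1, hp.2.1, hp.1.2, hp.2.2⟩

/-- Dirichlet energy on the half triangle, in box coordinates -/
noncomputable def EE (f : ℝ × ℝ → ℝ) : ℝ :=
  ∫ p in BX, p.1 * ((fderiv ℝ f (p.1, p.1 * p.2) (1, 0)) ^ 2 +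
    (fderiv ℝ f (p.1, p.1 * p.2) (0, 1)) ^ 2)

lemma EE_integrable (f : ℝ × ℝ → ℝ) (hf : ContDiff ℝ 1 f) :
    IntegrableOn (fun p : ℝ × ℝ => p.1 * ((fderiv ℝ f (p.1, p.1 * p.2) (1, 0)) ^ 2 +
      (fderiv ℝ f (p.1, p.1 * p.2) (0, 1)) ^ 2)) BX := by
  apply ContinuousOn.integrableOn_compact isCompact_Icc
  have := hf.continuous_fderiv (by norm_num)
  fun_prop

lemma slice_s (f : ℝ × ℝ → ℝ) (hf : ContDiff ℝ 1 f) (s t : ℝ) :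
    HasDerivAt (fun s => f (s, s * t))
      (fderiv ℝ f (s, s * t) (1, 0) + t * fderiv ℝ f (s, s * t) (0, 1)) s := by
  have hd : HasFDerivAt f (fderiv ℝ f (s, s * t)) (s, s * t) :=
    (hf.differentiable (by norm_num) _).hasFDerivAt
  have hc : HasDerivAt (fun s : ℝ => (s, s * t)) ((1 : ℝ), t) s := by
    simpa using (hasDerivAt_id s).prodMk ((hasDerivAt_id s).mul_const t)
  have := hd.comp_hasDerivAt s hc
  convert! this using 1
  have : ((1 : ℝ), t) = (1, 0) + t • (0, 1) := by simp
  rw [this, map_add, map_smul, smul_eq_mul]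

lemma slice_t (f : ℝ × ℝ → ℝ) (hf : ContDiff ℝ 1 f) (s t : ℝ) :
    HasDerivAt (fun t => f (s, s * t)) (s * fderiv ℝ f (s, s * t) (0, 1)) t := by
  have hd : HasFDerivAt f (fderiv ℝ f (s, s * t)) (s, s * t) :=
    (hf.differentiable (by norm_num) _).hasFDerivAt
  have hc : HasDerivAt (fun t : ℝ => (s, s * t)) ((0 : ℝ), s) t := by
    simpa using (hasDerivAt_const t s).prodMk ((hasDerivAt_id t).const_mul s)
  have := hd.comp_hasDerivAt t hc
  convert! this using 1
  have : ((0 : ℝ), s) = s • (0, 1) := by simp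
  rw [this, map_smul, smul_eq_mul]

/-- the eigenfunction and its derivatives -/
noncomputable def uu (a : ℝ) (p : ℝ × ℝ) : ℝ :=
  sin (a * p.1) * cosh (a * p.2) + cosh (a * p.1) * sin (a * p.2)
noncomputable def ux (a : ℝ) (p : ℝ × ℝ) : ℝ :=
  a * (cos (a * p.1) * cosh (a * p.2) + sinh (a * p.1) * sin (a * p.2))
noncomputable def uy (a : ℝ) (p : ℝ × ℝ) : ℝ :=
  a * (sin (a * p.1) * sinh (a * p.2) + cosh (a * p.1) * cos (a * p.2))
noncomputable def uxx (a : ℝ) (p : ℝ × ℝ) : ℝ :=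
  a ^ 2 * (- sin (a * p.1) * cosh (a * p.2) + cosh (a * p.1) * sin (a * p.2))
noncomputable def uxy (a : ℝ) (p : ℝ × ℝ) : ℝ :=
  a ^ 2 * (cos (a * p.1) * sinh (a * p.2) + sinh (a * p.1) * cos (a * p.2))

lemma uu_contDiff (a : ℝ) : ContDiff ℝ 1 (uu a) := by unfold uu; fun_prop
lemma ux_contDiff (a : ℝ) : ContDiff ℝ 1 (ux a) := by unfold ux; fun_prop
lemma uy_contDiff (a : ℝ) : ContDiff ℝ 1 (uy a) := by unfold uy; fun_prop

lemma uu_dx (a x y : ℝ) : HasDerivAt (fun x => uu a (x, y)) (ux a (x, y)) x := by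
  have h := (hasDerivAt_id x).const_mul a
  have := (h.sin.mul_const (cosh (a * y))).add (h.cosh.mul_const (sin (a * y)))
  simp only [uu, ux]
  convert! this using 1
  simp; ring
lemma uu_dy (a x y : ℝ) : HasDerivAt (fun y => uu a (x, y)) (uy a (x, y)) y := by
  have h := (hasDerivAt_id y).const_mul a
  have := (h.cosh.const_mul (sin (a * x))).add (h.sin.const_mul (cosh (a * x)))
  simp only [uu, uy]
  convert! this using 1
  simp; ring
lemma ux_dx (a x y : ℝ) : HasDerivAt (fun x => ux a (x, y)) (uxx a (x, y)) x := by
  have h := (hasDerivAt_id x).const_mul a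
  have := ((h.cos.mul_const (cosh (a * y))).add (h.sinh.mul_const (sin (a * y)))).const_mul a
  simp only [ux, uxx]
  convert! this using 1
  simp; ring
lemma ux_dy (a x y : ℝ) : HasDerivAt (fun y => ux a (x, y)) (uxy a (x, y)) y := by
  have h := (hasDerivAt_id y).const_mul a
  have := ((h.cosh.const_mul (cos (a * x))).add (h.sin.const_mul (sinh (a * x)))).const_mul a
  simp only [ux, uxy]
  convert! this using 1
  simp; ring
lemma uy_dx (a x y : ℝ) : HasDerivAt (fun x => uy a (x, y)) (uxy a (x, y)) x := by
  have h := (hasDerivAt_id x).const_mul a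
  have := ((h.sin.mul_const (sinh (a * y))).add (h.cosh.mul_const (cos (a * y)))).const_mul a
  simp only [uy, uxy]
  convert! this using 1
  simp; ring
lemma uy_dy (a x y : ℝ) : HasDerivAt (fun y => uy a (x, y)) (-uxx a (x, y)) y := by
  have h := (hasDerivAt_id y).const_mul a
  have := ((h.sinh.const_mul (sin (a * x))).add (h.cos.const_mul (cosh (a * x)))).const_mul a
  simp only [uy, uxx]
  convert! this using 1
  simp; ring

lemma fd_x (f : ℝ × ℝ → ℝ) (hf : ContDiff ℝ 1 f) (p : ℝ × ℝ) (d : ℝ)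
    (h : HasDerivAt (fun x => f (x, p.2)) d p.1) : fderiv ℝ f p (1, 0) = d := by
  have hd : HasFDerivAt f (fderiv ℝ f p) (p.1, p.2) :=
    (hf.differentiable (by norm_num) _).hasFDerivAt
  have hc : HasDerivAt (fun s : ℝ => (s, p.2)) ((1 : ℝ), (0 : ℝ)) p.1 :=
    (hasDerivAt_id _).prodMk (hasDerivAt_const _ _)
  exact (hd.comp_hasDerivAt p.1 hc).unique h
lemma fd_y (f : ℝ × ℝ → ℝ) (hf : ContDiff ℝ 1 f) (p : ℝ × ℝ) (d : ℝ)
    (h : HasDerivAt (fun y => f (p.1, y)) d p.2) : fderiv ℝ f p (0, 1) = d := by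
  have hd : HasFDerivAt f (fderiv ℝ f p) (p.1, p.2) :=
    (hf.differentiable (by norm_num) _).hasFDerivAt
  have hc : HasDerivAt (fun s : ℝ => (p.1, s)) ((0 : ℝ), (1 : ℝ)) p.2 :=
    (hasDerivAt_const _ _).prodMk (hasDerivAt_id _)
  exact (hd.comp_hasDerivAt p.2 hc).unique h

lemma uu_s (a s t : ℝ) : HasDerivAt (fun s => uu a (s, s * t))
    (ux a (s, s * t) + t * uy a (s, s * t)) s := by
  have := slice_s _ (uu_contDiff a) s t
  rwa [fd_x _ (uu_contDiff a) _ _ (uu_dx a _ _), fd_y _ (uu_contDiff a) _ _ (uu_dy a _ _)] at this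
lemma ux_s (a s t : ℝ) : HasDerivAt (fun s => ux a (s, s * t))
    (uxx a (s, s * t) + t * uxy a (s, s * t)) s := by
  have := slice_s _ (ux_contDiff a) s t
  rwa [fd_x _ (ux_contDiff a) _ _ (ux_dx a _ _), fd_y _ (ux_contDiff a) _ _ (ux_dy a _ _)] at this
lemma uu_t (a s t : ℝ) : HasDerivAt (fun t => uu a (s, s * t)) (s * uy a (s, s * t)) t := by
  have := slice_t _ (uu_contDiff a) s t
  rwa [fd_y _ (uu_contDiff a) _ _ (uu_dy a _ _)] at this
lemma ux_t (a s t : ℝ) : HasDerivAt (fun t => ux a (s, s * t)) (s * uxy a (s, s * t)) t := by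
  have := slice_t _ (ux_contDiff a) s t
  rwa [fd_y _ (ux_contDiff a) _ _ (ux_dy a _ _)] at this
lemma uy_t (a s t : ℝ) : HasDerivAt (fun t => uy a (s, s * t)) (s * (-uxx a (s, s * t))) t := by
  have := slice_t _ (uy_contDiff a) s t
  rwa [fd_y _ (uy_contDiff a) _ _ (uy_dy a _ _)] at this

lemma uu_diag (a s : ℝ) : uy a (s, s) = ux a (s, s) := by simp only [uy, ux]; ring
lemma uu_anti (a s : ℝ) : uu a (s, -s) = 0 := by simp only [uu]; simp; ring

lemma ux_bdry (a t : ℝ) (h : sin a * sinh a = cos a * cosh a) :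
    ux a (1, t) = a * tanh a * uu a (1, t) := by
  have : cosh a ≠ 0 := (cosh_pos a).ne'
  simp only [uu, ux, tanh_eq_sinh_div_cosh, mul_one]
  field_simp
  linear_combination (-a * cosh (a * t)) * h

/-- Green's identity for the eigenfunction. -/
lemma green_uu (a : ℝ) (h : sin a * sinh a = cos a * cosh a) :
    EE (uu a) = a * tanh a * ∫ t in (-1:ℝ)..1, uu a (1, t) ^ 2 := by
  have c0 := uu_contDiff a
  have c1 := ux_contDiff a
  have c2 := uy_contDiff a
  obtain ⟨-, hb⟩ := box_div (fun p => p.1 * (uu a (p.1, p.1 * p.2) * ux a (p.1, p.1 * p.2)))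
    (fun p => uu a (p.1, p.1 * p.2) * (uy a (p.1, p.1 * p.2) - p.2 * ux a (p.1, p.1 * p.2)))
    _ _
    (fun p _ => ContDiff.contDiffAt (by fun_prop)) (fun p _ => ContDiff.contDiffAt (by fun_prop))
    (fun p _ => (hasDerivAt_id p.1).mul ((uu_s a p.1 p.2).mul (ux_s a p.1 p.2)))
    (fun p _ => (uu_t a p.1 p.2).mul ((uy_t a p.1 p.2).sub
      ((hasDerivAt_id p.2).mul (ux_t a p.1 p.2))))
  have e : EE (uu a) = _ := (setIntegral_congr_fun measurableSet_Icc ?_).trans hb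
  · rw [e]
    simp only [mul_one, uu_diag, one_mul, sub_self, mul_zero, mul_neg, uu_anti, zero_mul,
      intervalIntegral.integral_zero, zero_add, sub_zero, ux_bdry a _ h]
    rw [← intervalIntegral.integral_const_mul]
    congr 1; ext t; ring
  · intro p hp
    simp only [id]
    rw [fd_x _ c0 _ _ (uu_dx a _ _), fd_y _ c0 _ _ (uu_dy a _ _)]
    ring

lemma picone (a ε : ℝ) (h : sin a * sinh a = cos a * cosh a) (hε : 0 < ε)
    (hu : ∀ p ∈ BX, 0 ≤ uu a (p.1, p.1 * p.2))
    (f : ℝ × ℝ → ℝ) (hf : ContDiff ℝ 1 f) (hf0 : ∀ s, f (s, -s) = 0) :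
    a * tanh a * ∫ t in (-1:ℝ)..1, f (1, t) ^ 2 * (uu a (1, t) / (uu a (1, t) + ε)) ≤ EE f := by
  have c0 := uu_contDiff a
  have c1 := ux_contDiff a
  have c2 := uy_contDiff a
  have hU : ∀ p ∈ BX, uu a (p.1, p.1 * p.2) + ε ≠ 0 := fun p hp => by
    have := hu p hp
    positivity
  obtain ⟨hi, hb⟩ := box_div
    (fun p => p.1 * (f (p.1, p.1 * p.2) ^ 2 * ux a (p.1, p.1 * p.2) / (uu a (p.1, p.1 * p.2) + ε)))
    (fun p => f (p.1, p.1 * p.2) ^ 2 * (uy a (p.1, p.1 * p.2) - p.2 * ux a (p.1, p.1 * p.2)) /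
      (uu a (p.1, p.1 * p.2) + ε))
    _ _
    (fun p hp => by
      have := hU p hp
      exact (ContDiff.contDiffAt (by fun_prop)).mul
        (ContDiffAt.div (ContDiff.contDiffAt (by fun_prop)) (ContDiff.contDiffAt (by fun_prop)) this))
    (fun p hp => by
      have := hU p hp
      exact
        (ContDiffAt.div (ContDiff.contDiffAt (by fun_prop)) (ContDiff.contDiffAt (by fun_prop)) this))
    (fun p hp => (hasDerivAt_id p.1).mul ((((slice_s f hf p.1 p.2).pow 2).mul
      (ux_s a p.1 p.2)).div ((uu_s a p.1 p.2).add_const ε) (hU p hp)))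
    (fun p hp => (((slice_t f hf p.1 p.2).pow 2).mul ((uy_t a p.1 p.2).sub
      ((hasDerivAt_id p.2).mul (ux_t a p.1 p.2)))).div ((uu_t a p.1 p.2).add_const ε) (hU p hp))
  have e : _ ≤ EE f := setIntegral_mono_on hi (EE_integrable f hf) measurableSet_Icc ?_
  · rw [hb] at e
    refine le_trans (le_of_eq ?_) e
    simp only [mul_one, uu_diag, one_mul, sub_self, mul_zero, mul_neg, hf0, zero_mul, zero_div,
      intervalIntegral.integral_zero, zero_add, sub_zero, ux_bdry a _ h, ne_eq, OfNat.ofNat_ne_zero,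
      not_false_eq_true, zero_pow]
    rw [← intervalIntegral.integral_const_mul]
    congr 1; ext t; ring
  · intro p hp
    have hU := hU p hp
    have hs := (mem_BX hp).1
    simp only [id, Pi.pow_apply, Pi.mul_apply, Pi.sub_apply, Pi.div_apply, Nat.cast_ofNat,
      Nat.add_one_sub_one, pow_one]
    set U := uu a (p.1, p.1 * p.2) + ε
    set F := f (p.1, p.1 * p.2)
    set fx := fderiv ℝ f (p.1, p.1 * p.2) (1, 0)
    set fy := fderiv ℝ f (p.1, p.1 * p.2) (0, 1)
    set vx := ux a (p.1, p.1 * p.2)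
    set vy := uy a (p.1, p.1 * p.2)
    set vxx := uxx a (p.1, p.1 * p.2)
    set vxy := uxy a (p.1, p.1 * p.2)
    have key : 0 ≤ p.1 * ((fx - F * vx / U) ^ 2 + (fy - F * vy / U) ^ 2) := by positivity
    rw [← sub_nonneg]
    refine key.trans_eq ?_
    field_simp
    ring

noncomputable def DD (x : ℝ) : ℝ := cos x * cosh x - sin x * sinh x

lemma DD_pos (a : ℝ) (ha : a < π / 2) (h : sin a * sinh a = cos a * cosh a)
    (x : ℝ) (h1 : -a < x) (h2 : x < a) : 0 < DD x := by
  have key : ∀ y, 0 ≤ y → y < a → 0 < DD y := by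
    intro y hy0 hya
    have hanti : StrictAntiOn DD (Set.Icc 0 a) := by
      apply strictAntiOn_of_deriv_neg (convex_Icc _ _)
      · unfold DD; fun_prop
      · intro x hx
        rw [interior_Icc] at hx
        have hd : HasDerivAt DD (-2 * (sin x * cosh x)) x := by
          have := ((hasDerivAt_cos x).mul (hasDerivAt_cosh x)).sub
            ((hasDerivAt_sin x).mul (hasDerivAt_sinh x))
          convert! this using 1
          ring
        rw [hd.deriv]
        have := sin_pos_of_pos_of_lt_pi hx.1 (by linarith [hx.2, pi_pos])
        have := cosh_pos x
        nlinarith [mul_pos ‹0 < sin x› this]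
    have := hanti (Set.mem_Icc.2 ⟨hy0, hya.le⟩) (Set.mem_Icc.2 ⟨by linarith, le_rfl⟩) hya
    have h0 : DD a = 0 := by unfold DD; linarith
    linarith
  rcases le_total 0 x with hx | hx
  · exact key x hx h2
  · have := key (-x) (by linarith) (by linarith)
    simpa [DD] using this

noncomputable def qq (x : ℝ) : ℝ := sin x / cosh x

lemma qq_mono (a : ℝ) (ha : a < π / 2) (h : sin a * sinh a = cos a * cosh a) :
    StrictMonoOn qq (Set.Icc (-a) a) := by
  apply strictMonoOn_of_deriv_pos (convex_Icc _ _)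
  · unfold qq
    exact ContinuousOn.div (by fun_prop) (by fun_prop) (fun x _ => (cosh_pos x).ne')
  · intro x hx
    rw [interior_Icc] at hx
    have := (hasDerivAt_sin x).div (hasDerivAt_cosh x) (cosh_pos x).ne'
    have e : deriv qq x = _ := this.deriv
    rw [e]
    have := DD_pos a ha h x hx.1 hx.2
    unfold DD at this
    have := cosh_pos x
    positivity

lemma uu_eq (a : ℝ) (p : ℝ × ℝ) :
    uu a p = cosh (a * p.1) * cosh (a * p.2) * (qq (a * p.1) - qq (-(a * p.2))) := by
  have h1 := (cosh_pos (a * p.1)).ne'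
  have h2 := (cosh_pos (a * p.2)).ne'
  simp only [uu, qq, sin_neg, cosh_neg]
  field_simp
  ring

lemma uu_nonneg (a : ℝ) (ha0 : 0 < a) (ha : a < π / 2) (h : sin a * sinh a = cos a * cosh a) :
    ∀ p ∈ BX, 0 ≤ uu a (p.1, p.1 * p.2) := by
  intro p hp
  obtain ⟨h1, h2, h3, h4⟩ := mem_BX hp
  rw [uu_eq]
  have := (qq_mono a ha h).monotoneOn (a := -(a * (p.1 * p.2))) (b := a * p.1)
    ⟨by nlinarith [mul_nonneg ha0.le h1], by nlinarith [mul_nonneg ha0.le h1]⟩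
    ⟨by nlinarith [mul_nonneg ha0.le h1], by nlinarith [mul_nonneg ha0.le h1]⟩
    (by nlinarith [mul_nonneg ha0.le h1])
  have c1 := cosh_pos (a * p.1)
  have c2 := cosh_pos (a * (p.1 * p.2))
  have : 0 ≤ qq (a * p.1) - qq (-(a * (p.1 * p.2))) := by linarith
  positivity

lemma uu_pos (a : ℝ) (ha0 : 0 < a) (ha : a < π / 2) (h : sin a * sinh a = cos a * cosh a)
    (t : ℝ) (h1 : -1 < t) (h2 : t ≤ 1) : 0 < uu a (1, t) := by
  rw [uu_eq]
  have := (qq_mono a ha h) (a := -(a * t)) (b := a * 1)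
    ⟨by nlinarith, by nlinarith⟩ ⟨by nlinarith, by nlinarith⟩ (by nlinarith)
  have c1 := cosh_pos (a * 1)
  have c2 := cosh_pos (a * t)
  have : 0 < qq (a * 1) - qq (-(a * t)) := by linarith
  positivity

lemma odd_part (a : ℝ) (ha0 : 0 < a) (ha : a < π / 2) (h : sin a * sinh a = cos a * cosh a)
    (f : ℝ × ℝ → ℝ) (hf : ContDiff ℝ 1 f) (hf0 : ∀ s, f (s, -s) = 0) :
    a * tanh a * ∫ t in (-1:ℝ)..1, f (1, t) ^ 2 ≤ EE f := by
  have hlim : Filter.Tendsto (fun ε : ℝ => ∫ t in (-1:ℝ)..1,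
      f (1, t) ^ 2 * (uu a (1, t) / (uu a (1, t) + ε))) (nhdsWithin 0 (Set.Ioi 0))
      (nhds (∫ t in (-1:ℝ)..1, f (1, t) ^ 2)) := by
    have hc := hf.continuous
    have hu := (uu_contDiff a).continuous
    apply intervalIntegral.tendsto_integral_filter_of_dominated_convergence
      (fun t => f (1, t) ^ 2)
    · filter_upwards with ε
      apply Measurable.aestronglyMeasurable
      apply Measurable.mul (by fun_prop)
      apply Measurable.div
      · exact (by fun_prop : Continuous fun t : ℝ => uu a (1, t)).measurable
      · exact (by fun_prop : Continuous fun t : ℝ => uu a (1, t) + ε).measurable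
    · filter_upwards [self_mem_nhdsWithin] with ε hε
      filter_upwards with t ht
      rw [Set.uIoc_of_le (by norm_num)] at ht
      have hε : 0 < ε := hε
      have := uu_pos a ha0 ha h t ht.1 ht.2
      rw [norm_mul, norm_of_nonneg (sq_nonneg _), norm_of_nonneg (by positivity)]
      apply mul_le_of_le_one_right (sq_nonneg _)
      rw [div_le_one (by positivity)]
      linarith
    · apply Continuous.intervalIntegrable; fun_prop
    · filter_upwards with t ht
      rw [Set.uIoc_of_le (by norm_num)] at ht
      have hp := uu_pos a ha0 ha h t ht.1 ht.2
      have : ContinuousAt (fun ε : ℝ => f (1, t) ^ 2 * (uu a (1, t) / (uu a (1, t) + ε))) 0 := by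
        apply ContinuousAt.mul continuousAt_const
        apply ContinuousAt.div continuousAt_const (by fun_prop)
        simpa using hp.ne'
      have h2 := this.tendsto
      rw [add_zero, div_self hp.ne', mul_one] at h2
      exact h2.mono_left nhdsWithin_le_nhds
  refine le_of_tendsto (hlim.const_mul (a * tanh a)) ?_
  filter_upwards [self_mem_nhdsWithin] with ε hε
  exact picone a ε h hε (uu_nonneg a ha0 ha h) f hf hf0

lemma poinc (g G : ℝ → ℝ) (hg : Continuous g) (hG : ∀ t, HasDerivAt G (g t) t)
    (h1 : G (-1) = 0) (h2 : G 1 = 0) :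
    ∫ t in (-1:ℝ)..1, G t ^ 2 ≤ 0.51 * ∫ t in (-1:ℝ)..1, g t ^ 2 := by
  have hGc : Continuous G := continuous_iff_continuousAt.2 fun t => (hG t).continuousAt
  have hne : ∀ t ∈ Set.uIcc (-1:ℝ) 1, (1.02 - t ^ 2) ≠ 0 := by
    intro t ht
    rw [Set.uIcc_of_le (by norm_num)] at ht
    have := ht.1; have := ht.2
    nlinarith
  have hd : ∀ t ∈ Set.uIcc (-1:ℝ) 1, HasDerivAt (fun t => G t ^ 2 * (2 * t / (1.02 - t ^ 2)))
      (2 * G t * g t * (2 * t / (1.02 - t ^ 2)) +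
        G t ^ 2 * (2 / (1.02 - t ^ 2) + 4 * t ^ 2 / (1.02 - t ^ 2) ^ 2)) t := by
    intro t ht
    have := hne t ht
    have := ((hG t).pow 2).mul ((((hasDerivAt_id t).const_mul 2)).div
      ((hasDerivAt_const t (1.02:ℝ)).sub ((hasDerivAt_id t).pow 2)) this)
    convert! this using 1
    simp only [id, Pi.pow_apply, Pi.div_apply, Pi.sub_apply, Nat.cast_ofNat, Nat.add_one_sub_one,
      pow_one, mul_one]
    field_simp
    ring
  have hci : IntervalIntegrable (fun t => 2 * G t * g t * (2 * t / (1.02 - t ^ 2)) +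
        G t ^ 2 * (2 / (1.02 - t ^ 2) + 4 * t ^ 2 / (1.02 - t ^ 2) ^ 2)) volume (-1) 1 := by
    apply ContinuousOn.intervalIntegrable
    have e1 : ContinuousOn (fun t : ℝ => 2 * t / (1.02 - t ^ 2)) (Set.uIcc (-1:ℝ) 1) :=
      ContinuousOn.div (by fun_prop) (by fun_prop) hne
    have e2 : ContinuousOn (fun t : ℝ => 2 / (1.02 - t ^ 2)) (Set.uIcc (-1:ℝ) 1) :=
      ContinuousOn.div (by fun_prop) (by fun_prop) hne
    have e3 : ContinuousOn (fun t : ℝ => 4 * t ^ 2 / (1.02 - t ^ 2) ^ 2) (Set.uIcc (-1:ℝ) 1) :=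
      ContinuousOn.div (by fun_prop) (by fun_prop) (fun t ht => pow_ne_zero 2 (hne t ht))
    fun_prop
  have hI := intervalIntegral.integral_eq_sub_of_hasDerivAt hd hci
  simp only [h1, h2] at hI
  have hmono : ∫ t in (-1:ℝ)..1, (G t ^ 2 - 0.51 * g t ^ 2) ≤
      ∫ t in (-1:ℝ)..1, 0.51 * (2 * G t * g t * (2 * t / (1.02 - t ^ 2)) +
        G t ^ 2 * (2 / (1.02 - t ^ 2) + 4 * t ^ 2 / (1.02 - t ^ 2) ^ 2)) := by
    apply intervalIntegral.integral_mono_on (by norm_num)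
    · apply Continuous.intervalIntegrable; fun_prop
    · exact hci.const_mul _
    · intro t ht
      have hp : 0 < 1.02 - t ^ 2 := by
        have := ht.1; have := ht.2
        nlinarith
      have k1 : (1:ℝ) ≤ 0.51 * (2 / (1.02 - t ^ 2)) := by
        rw [← mul_div_assoc, le_div_iff₀ hp]
        nlinarith [sq_nonneg t]
      have k2 := sq_nonneg (g t + G t * (2 * t / (1.02 - t ^ 2)))
      have k3 : 4 * t ^ 2 / (1.02 - t ^ 2) ^ 2 = (2 * t / (1.02 - t ^ 2)) ^ 2 := by
        rw [div_pow]; ring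
      rw [k3]
      nlinarith [mul_le_mul_of_nonneg_left k1 (sq_nonneg (G t))]
  rw [intervalIntegral.integral_const_mul, hI, intervalIntegral.integral_sub,
    intervalIntegral.integral_const_mul] at hmono
  · norm_num at hmono ⊢
    linarith
  · apply Continuous.intervalIntegrable; fun_prop
  · apply Continuous.intervalIntegrable; fun_prop

lemma int_box (k : ℝ → ℝ) :
    ∫ p in BX, p.1 ^ 3 * k p.2 = (1 / 4) * ∫ t in (-1:ℝ)..1, k t := by
  have : BX = Set.Icc (0:ℝ) 1 ×ˢ Set.Icc (-1:ℝ) 1 := by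
    rw [BX, Set.Icc_prod_eq]
  rw [this]
  have e := setIntegral_prod_mul (μ := (volume : Measure ℝ)) (ν := (volume : Measure ℝ))
    (fun s : ℝ => s ^ 3) k (Set.Icc (0:ℝ) 1) (Set.Icc (-1:ℝ) 1)
  refine Eq.trans e ?_
  rw [integral_Icc_eq_integral_Ioc, integral_Icc_eq_integral_Ioc,
    ← intervalIntegral.integral_of_le (by norm_num), ← intervalIntegral.integral_of_le (by norm_num),
    integral_pow]
  norm_num

lemma even_part (f : ℝ × ℝ → ℝ) (hf : ContDiff ℝ 1 f) (hf0 : ∫ t in (-1:ℝ)..1, f (1, t) = 0) :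
    ∫ t in (-1:ℝ)..1, f (1, t) ^ 2 ≤ 1.265 * EE f := by
  have hgd : ContDiff ℝ 1 (fun t => f (1, t)) := by fun_prop
  set g : ℝ → ℝ := fun t => f (1, t) with hgdef
  have hg : Continuous g := hgd.continuous
  set G : ℝ → ℝ := fun t => ∫ x in (-1:ℝ)..t, g x with hGdef
  have hG : ∀ t, HasDerivAt G (g t) t := fun t =>
    intervalIntegral.integral_hasDerivAt_right (hg.intervalIntegrable _ _)
      (hg.stronglyMeasurableAtFilter _ _) hg.continuousAt
  have hG1 : G (-1) = 0 := intervalIntegral.integral_same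
  have hG2 : G 1 = 0 := hf0
  have hGc : Continuous G := continuous_iff_continuousAt.2 fun t => (hG t).continuousAt
  have hGd : ContDiff ℝ 1 G := by
    rw [contDiff_one_iff_deriv]
    refine ⟨fun t => (hG t).differentiableAt, ?_⟩
    have : deriv G = g := funext fun t => (hG t).deriv
    rwa [this]
  have hp := poinc g G hg hG hG1 hG2
  -- the flux identity
  obtain ⟨hi, hb⟩ := box_div
    (fun p => p.1 ^ 2 * (f (p.1, p.1 * p.2) * g p.2))
    (fun p => (-2 * p.1) * (f (p.1, p.1 * p.2) * G p.2))
    _ _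
    (fun p _ => ContDiff.contDiffAt (by fun_prop)) (fun p _ => ContDiff.contDiffAt (by fun_prop))
    (fun p _ => ((hasDerivAt_id p.1).pow 2).mul ((slice_s f hf p.1 p.2).mul_const (g p.2)))
    (fun p _ => ((slice_t f hf p.1 p.2).mul (hG p.2)).const_mul (-2 * p.1))
  simp only [hG1, hG2, mul_zero, intervalIntegral.integral_zero, one_pow, one_mul, sub_zero,
    zero_add, ne_eq, OfNat.ofNat_ne_zero, not_false_eq_true, zero_pow, zero_mul] at hb
  have hb2 : ∫ t in (-1:ℝ)..1, f (1, t) * g t = ∫ t in (-1:ℝ)..1, g t ^ 2 := by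
    congr 1; ext t; simp only [hgdef]; ring
  rw [hb2] at hb
  have hi2 : IntegrableOn (fun p : ℝ × ℝ => p.1 ^ 3 * (g p.2 ^ 2 + (p.2 * g p.2 - 2 * G p.2) ^ 2))
      BX := by
    apply ContinuousOn.integrableOn_compact isCompact_Icc
    fun_prop
  have hE := EE_integrable f hf
  have hmono : _ ≤ ∫ p in BX, ((1.265 / 2) * (p.1 * ((fderiv ℝ f (p.1, p.1 * p.2) (1, 0)) ^ 2 +
      (fderiv ℝ f (p.1, p.1 * p.2) (0, 1)) ^ 2)) +
      (1 / (2 * 1.265)) * (p.1 ^ 3 * (g p.2 ^ 2 + (p.2 * g p.2 - 2 * G p.2) ^ 2))) :=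
    setIntegral_mono_on hi ((hE.const_mul _).add (hi2.const_mul _)) measurableSet_Icc ?_
  · rw [hb, integral_add (hE.const_mul _) (hi2.const_mul _), integral_const_mul,
      integral_const_mul, int_box (fun t => g t ^ 2 + (t * g t - 2 * G t) ^ 2)] at hmono
    have hq : ∫ t in (-1:ℝ)..1, (g t ^ 2 + (t * g t - 2 * G t) ^ 2) ≤
        5.06 * ∫ t in (-1:ℝ)..1, g t ^ 2 := by
      have hI := intervalIntegral.integral_eq_sub_of_hasDerivAt (a := -1) (b := 1)
        (f := fun t => t * G t ^ 2) (f' := fun t => G t ^ 2 + t * (2 * G t * g t))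
        (fun t _ => by
          have := (hasDerivAt_id t).mul ((hG t).pow 2)
          convert! this using 1
          simp) (by apply Continuous.intervalIntegrable; fun_prop)
      simp only [hG1, hG2] at hI
      have hm : ∫ t in (-1:ℝ)..1, (g t ^ 2 + (t * g t - 2 * G t) ^ 2) ≤
          ∫ t in (-1:ℝ)..1, (2 * g t ^ 2 + 6 * G t ^ 2 -
            2 * (G t ^ 2 + t * (2 * G t * g t))) := by
        apply intervalIntegral.integral_mono_on (by norm_num)
        · apply Continuous.intervalIntegrable; fun_prop
        · apply Continuous.intervalIntegrable; fun_prop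
        · intro t ht
          have : t ^ 2 ≤ 1 := by have := ht.1; have := ht.2; nlinarith
          nlinarith [mul_le_mul_of_nonneg_left this (sq_nonneg (g t))]
      refine hm.trans ?_
      rw [intervalIntegral.integral_sub (by apply Continuous.intervalIntegrable; fun_prop)
        (by apply Continuous.intervalIntegrable; fun_prop),
        intervalIntegral.integral_add (by apply Continuous.intervalIntegrable; fun_prop)
        (by apply Continuous.intervalIntegrable; fun_prop), intervalIntegral.integral_const_mul,
        intervalIntegral.integral_const_mul, intervalIntegral.integral_const_mul, hI]
      norm_num at hp ⊢
      linarith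
    have hEE : EE f = ∫ p in BX, p.1 * ((fderiv ℝ f (p.1, p.1 * p.2) (1, 0)) ^ 2 +
      (fderiv ℝ f (p.1, p.1 * p.2) (0, 1)) ^ 2) := rfl
    rw [← hEE] at hmono
    norm_num at hmono hq ⊢
    linarith
  · intro p hp
    have hs := (mem_BX hp).1
    simp only [id, Pi.pow_apply, Nat.cast_ofNat, Nat.add_one_sub_one, pow_one, mul_one]
    set F := f (p.1, p.1 * p.2)
    set fx := fderiv ℝ f (p.1, p.1 * p.2) (1, 0)
    set fy := fderiv ℝ f (p.1, p.1 * p.2) (0, 1)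
    have key : 0 ≤ p.1 * ((1.265 * fx - p.1 * g p.2) ^ 2 +
      (1.265 * fy - p.1 * (p.2 * g p.2 - 2 * G p.2)) ^ 2) / (2 * 1.265) := by positivity
    rw [← sub_nonneg]
    refine key.trans_eq ?_
    field_simp
    ring

lemma tan_facts (z : ℝ) (h0 : 0 < z) (h1 : z < π / 2) (h : tanh z * tan z = 1) :
    sin z * sinh z = cos z * cosh z ∧ z * tanh z * 1.265 ≤ 1 := by
  have hc : 0 < cos z := cos_pos_of_mem_Ioo ⟨by linarith, h1⟩
  have hch := cosh_pos z
  have e1 : sin z * sinh z = cos z * cosh z := by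
    rw [tanh_eq_sinh_div_cosh, tan_eq_sin_div_cos] at h
    field_simp at h
    linarith
  refine ⟨e1, ?_⟩
  have hD1 : DD 1 < 0 := by
    have c1 := cos_one_le
    have s1 : (3:ℝ)/4 < sin 1 := by
      have := sin_gt_sub_cube (x := 1) one_pos
      norm_num at this; linarith
    have hE := exp_one_gt_d9
    have hE' := exp_one_lt_d9
    have hinv : exp 1 * exp (-1) = 1 := by rw [← exp_add]; simp
    have hb : exp (-1) < 0.37 := by nlinarith
    unfold DD
    rw [cosh_eq, sinh_eq]
    nlinarith [exp_pos (-1)]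
  have hz1 : z < 1 := by
    by_contra hz
    push Not at hz
    rcases hz.eq_or_lt with hz | hz
    · subst hz; unfold DD at hD1; linarith
    · have := DD_pos z h1 e1 1 (by linarith) hz
      linarith
  have ht : tanh z < 0.79 := by
    rw [tanh_eq_sinh_div_cosh, div_lt_iff₀ hch, sinh_eq, cosh_eq]
    have hinv : exp z * exp (-z) = 1 := by rw [← exp_add]; simp
    have : exp z < 2.7182818286 := (exp_lt_exp.2 hz1).trans exp_one_lt_d9
    have hp := exp_pos z
    have : 0.36 < exp (-z) := by nlinarith
    nlinarith
  have : 0 < tanh z := by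
    rw [tanh_eq_sinh_div_cosh]
    exact div_pos (sinh_pos_iff.2 h0) hch
  nlinarith

lemma grad_sq (w : EuclideanSpace ℝ (Fin 2) → ℝ) (x : EuclideanSpace ℝ (Fin 2)) :
    ‖gradient w x‖ ^ 2 = (fderiv ℝ w x !₂[1, 0]) ^ 2 + (fderiv ℝ w x !₂[0, 1]) ^ 2 := by
  have hi : ∀ y, fderiv ℝ w x y = inner ℝ (gradient w x) y := by
    intro y
    rw [gradient, InnerProductSpace.toDual_symm_apply]
  have h0 : fderiv ℝ w x !₂[1, 0] = gradient w x 0 := by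
    rw [hi, PiLp.inner_apply, Fin.sum_univ_two]; simp
  have h1 : fderiv ℝ w x !₂[0, 1] = gradient w x 1 := by
    rw [hi, PiLp.inner_apply, Fin.sum_univ_two]; simp
  rw [h0, h1, EuclideanSpace.norm_sq_eq, Fin.sum_univ_two]
  simp

noncomputable def AA (h : ℝ) (w : EuclideanSpace ℝ (Fin 2) → ℝ) (p : ℝ × ℝ) : ℝ :=
  w !₂[h / 2 * (1 + p.1), h / 2 * (1 + p.2)]
noncomputable def BB (h : ℝ) (w : EuclideanSpace ℝ (Fin 2) → ℝ) (p : ℝ × ℝ) : ℝ :=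
  w !₂[h / 2 * (1 - p.2), h / 2 * (1 - p.1)]

lemma mk2_contDiff {n : WithTop ℕ∞} {E : Type*} [NormedAddCommGroup E] [NormedSpace ℝ E]
    (f g : E → ℝ) (hf : ContDiff ℝ n f) (hg : ContDiff ℝ n g) :
    ContDiff ℝ n (fun p => (!₂[f p, g p] : EuclideanSpace ℝ (Fin 2))) := by
  rw [contDiff_euclidean]
  intro i
  fin_cases i
  · simpa using hf
  · simpa using hg

lemma AA_contDiff (h : ℝ) (w : EuclideanSpace ℝ (Fin 2) → ℝ) (hw : ContDiff ℝ 1 w) :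
    ContDiff ℝ 1 (AA h w) :=
  hw.comp (mk2_contDiff _ _ (by fun_prop) (by fun_prop))
lemma BB_contDiff (h : ℝ) (w : EuclideanSpace ℝ (Fin 2) → ℝ) (hw : ContDiff ℝ 1 w) :
    ContDiff ℝ 1 (BB h w) :=
  hw.comp (mk2_contDiff _ _ (by fun_prop) (by fun_prop))

lemma curve_deriv (w : EuclideanSpace ℝ (Fin 2) → ℝ) (hw : ContDiff ℝ 1 w)
    (c d : ℝ → ℝ) (c' d' s : ℝ) (hc : HasDerivAt c c' s) (hd : HasDerivAt d d' s) :
    HasDerivAt (fun s => w !₂[c s, d s]) (c' * fderiv ℝ w !₂[c s, d s] !₂[1, 0] +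
      d' * fderiv ℝ w !₂[c s, d s] !₂[0, 1]) s := by
  have hf : HasFDerivAt w (fderiv ℝ w !₂[c s, d s]) !₂[c s, d s] :=
    (hw.differentiable (by norm_num) _).hasFDerivAt
  have hcd : HasDerivAt (fun s => (!₂[c s, d s] : EuclideanSpace ℝ (Fin 2))) !₂[c', d'] s := by
    rw [hasDerivAt_iff_hasFDerivAt, ← hasFDerivWithinAt_univ, hasFDerivWithinAt_euclidean]
    intro i
    fin_cases i
    · have := hc.hasFDerivAt.hasFDerivWithinAt (s := Set.univ)
      convert! this using 1
    · have := hd.hasFDerivAt.hasFDerivWithinAt (s := Set.univ)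
      convert! this using 1
  have := hf.comp_hasDerivAt s hcd
  convert! this using 1
  have e : (!₂[c', d'] : EuclideanSpace ℝ (Fin 2)) = c' • !₂[1, 0] + d' • !₂[0, 1] := by
    ext i; fin_cases i <;> simp
  rw [e, map_add, map_smul, map_smul, smul_eq_mul, smul_eq_mul]

lemma AA_grad (h : ℝ) (w : EuclideanSpace ℝ (Fin 2) → ℝ) (hw : ContDiff ℝ 1 w) (p : ℝ × ℝ) :
    (fderiv ℝ (AA h w) p (1, 0)) ^ 2 + (fderiv ℝ (AA h w) p (0, 1)) ^ 2 =
      h ^ 2 / 4 * ‖gradient w !₂[h / 2 * (1 + p.1), h / 2 * (1 + p.2)]‖ ^ 2 := by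
  have d1 : ∀ x : ℝ, HasDerivAt (fun x => h / 2 * (1 + x)) (h / 2) x := fun x => by
    simpa using ((hasDerivAt_id x).const_add 1).const_mul (h / 2)
  rw [fd_x _ (AA_contDiff h w hw) p _
      (curve_deriv w hw _ _ _ _ _ (d1 p.1) (hasDerivAt_const _ (h / 2 * (1 + p.2)))),
    fd_y _ (AA_contDiff h w hw) p _
      (curve_deriv w hw _ _ _ _ _ (hasDerivAt_const _ (h / 2 * (1 + p.1))) (d1 p.2)), grad_sq]
  ring

lemma BB_grad (h : ℝ) (w : EuclideanSpace ℝ (Fin 2) → ℝ) (hw : ContDiff ℝ 1 w) (p : ℝ × ℝ) :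
    (fderiv ℝ (BB h w) p (1, 0)) ^ 2 + (fderiv ℝ (BB h w) p (0, 1)) ^ 2 =
      h ^ 2 / 4 * ‖gradient w !₂[h / 2 * (1 - p.2), h / 2 * (1 - p.1)]‖ ^ 2 := by
  have d1 : ∀ x : ℝ, HasDerivAt (fun x => h / 2 * (1 - x)) (-(h / 2)) x := fun x => by
    simpa using ((hasDerivAt_id x).const_sub 1).const_mul (h / 2)
  rw [fd_x _ (BB_contDiff h w hw) p _
      (curve_deriv w hw _ _ _ _ _ (hasDerivAt_const _ (h / 2 * (1 - p.2))) (d1 p.1)),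
    fd_y _ (BB_contDiff h w hw) p _
      (curve_deriv w hw _ _ _ _ _ (d1 p.2) (hasDerivAt_const _ (h / 2 * (1 - p.1)))), grad_sq]
  ring

lemma to_prod (h : ℝ) (F : EuclideanSpace ℝ (Fin 2) → ℝ) :
    ∫ x in {x : EuclideanSpace ℝ (Fin 2) | 0 < x 1 ∧ x 1 < x 0 ∧ x 0 < h}, F x =
      ∫ q in {q : ℝ × ℝ | 0 < q.2 ∧ q.2 < q.1 ∧ q.1 < h}, F !₂[q.1, q.2] := by
  have mp := ((volume_preserving_finTwoArrow ℝ).symm _).trans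
    (EuclideanSpace.volume_preserving_symm_measurableEquiv_toLp (Fin 2)).symm
  have := mp.setIntegral_preimage_emb (MeasurableEquiv.measurableEmbedding _) F
    {x : EuclideanSpace ℝ (Fin 2) | 0 < x 1 ∧ x 1 < x 0 ∧ x 0 < h}
  rw [← this]
  rfl

lemma mapA (h : ℝ) (hh : 0 < h) (g : ℝ × ℝ → ℝ) :
    ∫ q in (fun p : ℝ × ℝ => (h / 2 * (1 + p.1), h / 2 * (1 + p.1 * p.2))) ''
        (Set.Ioo (0:ℝ) 1 ×ˢ Set.Ico (-1:ℝ) 1), g q =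
      ∫ p in BX, p.1 * (h ^ 2 / 4 * g (h / 2 * (1 + p.1), h / 2 * (1 + p.1 * p.2))) := by
  rw [integral_image_eq_integral_abs_det_fderiv_smul (μ := volume)
    (f' := fun p => (Matrix.toLin (.finTwoProd ℝ) (.finTwoProd ℝ)
      !![h / 2, 0; h / 2 * p.2, h / 2 * p.1]).toContinuousLinearMap)
    (measurableSet_Ioo.prod measurableSet_Ico)]
  · have hae : (Set.Ioo (0:ℝ) 1 ×ˢ Set.Ico (-1:ℝ) 1 : Set (ℝ × ℝ)) =ᵐ[volume] BX := by
      have : BX = Set.Icc (0:ℝ) 1 ×ˢ Set.Icc (-1:ℝ) 1 := by rw [BX, Set.Icc_prod_eq]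
      rw [this]
      exact Measure.set_prod_ae_eq Ioo_ae_eq_Icc Ico_ae_eq_Icc
    rw [setIntegral_congr_set hae]
    apply setIntegral_congr_fun measurableSet_Icc
    intro p hp
    have hs := (mem_BX hp).1
    simp only [LinearMap.det_toContinuousLinearMap, LinearMap.det_toLin, Matrix.det_fin_two_of,
      smul_eq_mul]
    rw [abs_of_nonneg (by nlinarith [mul_nonneg (mul_nonneg hh.le hh.le) hs])]
    ring
  · intro p hp
    apply HasFDerivAt.hasFDerivWithinAt
    rw [Matrix.toLin_finTwoProd_toContinuousLinearMap]
    have h1 : HasFDerivAt (fun p : ℝ × ℝ => p.1) (ContinuousLinearMap.fst ℝ ℝ ℝ) p := hasFDerivAt_fst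
    have h2 : HasFDerivAt (fun p : ℝ × ℝ => p.2) (ContinuousLinearMap.snd ℝ ℝ ℝ) p := hasFDerivAt_snd
    have := ((h1.const_add 1).const_mul (h / 2)).prodMk
      (((h1.mul h2).const_add 1).const_mul (h / 2))
    convert! this using 1
    ext <;> simp
  · intro p hp q hq hpq
    simp only [Prod.mk.injEq] at hpq
    have hp1 : 0 < p.1 := hp.1.1
    have e1 : p.1 = q.1 := by nlinarith [mul_left_cancel₀ (by positivity : h / 2 ≠ 0) hpq.1]
    have e2 := mul_left_cancel₀ (by positivity : h / 2 ≠ 0) hpq.2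
    rw [← e1] at e2
    have e3 : p.2 = q.2 := mul_left_cancel₀ hp1.ne' (by linarith)
    exact Prod.ext e1 e3

lemma mapB (h : ℝ) (hh : 0 < h) (g : ℝ × ℝ → ℝ) :
    ∫ q in (fun p : ℝ × ℝ => (h / 2 * (1 - p.1 * p.2), h / 2 * (1 - p.1))) ''
        (Set.Ioo (0:ℝ) 1 ×ˢ Set.Ioo (-1:ℝ) 1), g q =
      ∫ p in BX, p.1 * (h ^ 2 / 4 * g (h / 2 * (1 - p.1 * p.2), h / 2 * (1 - p.1))) := by
  rw [integral_image_eq_integral_abs_det_fderiv_smul (μ := volume)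
    (f' := fun p => (Matrix.toLin (.finTwoProd ℝ) (.finTwoProd ℝ)
      !![-(h / 2 * p.2), -(h / 2 * p.1); -(h / 2), 0]).toContinuousLinearMap)
    (measurableSet_Ioo.prod measurableSet_Ioo)]
  · have hae : (Set.Ioo (0:ℝ) 1 ×ˢ Set.Ioo (-1:ℝ) 1 : Set (ℝ × ℝ)) =ᵐ[volume] BX := by
      have : BX = Set.Icc (0:ℝ) 1 ×ˢ Set.Icc (-1:ℝ) 1 := by rw [BX, Set.Icc_prod_eq]
      rw [this]
      exact Measure.set_prod_ae_eq Ioo_ae_eq_Icc Ioo_ae_eq_Icc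
    rw [setIntegral_congr_set hae]
    apply setIntegral_congr_fun measurableSet_Icc
    intro p hp
    have hs := (mem_BX hp).1
    simp only [LinearMap.det_toContinuousLinearMap, LinearMap.det_toLin, Matrix.det_fin_two_of,
      smul_eq_mul]
    rw [abs_of_nonpos (by nlinarith [mul_nonneg (mul_nonneg hh.le hh.le) hs])]
    ring
  · intro p hp
    apply HasFDerivAt.hasFDerivWithinAt
    rw [Matrix.toLin_finTwoProd_toContinuousLinearMap]
    have h1 : HasFDerivAt (fun p : ℝ × ℝ => p.1) (ContinuousLinearMap.fst ℝ ℝ ℝ) p := hasFDerivAt_fst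
    have h2 : HasFDerivAt (fun p : ℝ × ℝ => p.2) (ContinuousLinearMap.snd ℝ ℝ ℝ) p := hasFDerivAt_snd
    have := (((h1.mul h2).const_sub 1).const_mul (h / 2)).prodMk
      ((h1.const_sub 1).const_mul (h / 2))
    convert! this using 1
    ext <;> simp
  · intro p hp q hq hpq
    simp only [Prod.mk.injEq] at hpq
    have hp1 : 0 < p.1 := hp.1.1
    have e1 : p.1 = q.1 := by nlinarith [mul_left_cancel₀ (by positivity : h / 2 ≠ 0) hpq.2]
    have e2 := mul_left_cancel₀ (by positivity : h / 2 ≠ 0) hpq.1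
    rw [← e1] at e2
    have e3 : p.2 = q.2 := mul_left_cancel₀ hp1.ne' (by linarith)
    exact Prod.ext e1 e3

lemma imgA (h : ℝ) (hh : 0 < h) :
    (fun p : ℝ × ℝ => (h / 2 * (1 + p.1), h / 2 * (1 + p.1 * p.2))) ''
        (Set.Ioo (0:ℝ) 1 ×ˢ Set.Ico (-1:ℝ) 1) =
      {q : ℝ × ℝ | 0 < q.2 ∧ q.2 < q.1 ∧ q.1 < h} ∩ {q | h ≤ q.1 + q.2} := by
  ext q
  constructor
  · rintro ⟨p, ⟨⟨h1, h2⟩, h3, h4⟩, rfl⟩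
    simp only [Set.mem_inter_iff, Set.mem_ofPred_eq]
    have k1 : p.1 * p.2 < p.1 := by nlinarith
    have k2 : -p.1 ≤ p.1 * p.2 := by nlinarith
    refine ⟨⟨?_, ?_, ?_⟩, ?_⟩ <;> nlinarith
  · rintro ⟨⟨h1, h2, h3⟩, h4⟩
    have h4 : h ≤ q.1 + q.2 := h4
    have hX : 0 < 2 * q.1 / h - 1 := by
      rw [sub_pos, lt_div_iff₀ hh]; linarith
    have eX : h * (2 * q.1 / h - 1) = 2 * q.1 - h := by field_simp
    have eY : h * (2 * q.2 / h - 1) = 2 * q.2 - h := by field_simp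
    refine ⟨(2 * q.1 / h - 1, (2 * q.2 / h - 1) / (2 * q.1 / h - 1)), ⟨⟨hX, ?_⟩, ?_, ?_⟩, ?_⟩
    · show 2 * q.1 / h - 1 < 1
      nlinarith
    · show -1 ≤ (2 * q.2 / h - 1) / (2 * q.1 / h - 1)
      rw [le_div_iff₀ hX]
      nlinarith
    · show (2 * q.2 / h - 1) / (2 * q.1 / h - 1) < 1
      rw [div_lt_one hX]
      nlinarith
    · simp only [mul_div_cancel₀ _ hX.ne']
      ext
      · show h / 2 * (1 + (2 * q.1 / h - 1)) = q.1
        linarith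
      · show h / 2 * (1 + (2 * q.2 / h - 1)) = q.2
        linarith

lemma imgB (h : ℝ) (hh : 0 < h) :
    (fun p : ℝ × ℝ => (h / 2 * (1 - p.1 * p.2), h / 2 * (1 - p.1))) ''
        (Set.Ioo (0:ℝ) 1 ×ˢ Set.Ioo (-1:ℝ) 1) =
      {q : ℝ × ℝ | 0 < q.2 ∧ q.2 < q.1 ∧ q.1 < h} ∩ {q | q.1 + q.2 < h} := by
  ext q
  constructor
  · rintro ⟨p, ⟨⟨h1, h2⟩, h3, h4⟩, rfl⟩
    simp only [Set.mem_inter_iff, Set.mem_ofPred_eq]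
    have k1 : p.1 * p.2 < p.1 := by nlinarith
    have k2 : -p.1 < p.1 * p.2 := by nlinarith
    refine ⟨⟨?_, ?_, ?_⟩, ?_⟩ <;> nlinarith
  · rintro ⟨⟨h1, h2, h3⟩, h4⟩
    have h4 : q.1 + q.2 < h := h4
    have hX : 0 < 1 - 2 * q.2 / h := by
      rw [sub_pos, div_lt_iff₀ hh]; linarith
    have eX : h * (1 - 2 * q.1 / h) = h - 2 * q.1 := by field_simp
    have eY : h * (1 - 2 * q.2 / h) = h - 2 * q.2 := by field_simp
    refine ⟨(1 - 2 * q.2 / h, (1 - 2 * q.1 / h) / (1 - 2 * q.2 / h)), ⟨⟨hX, ?_⟩, ?_, ?_⟩, ?_⟩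
    · show 1 - 2 * q.2 / h < 1
      nlinarith
    · show -1 < (1 - 2 * q.1 / h) / (1 - 2 * q.2 / h)
      rw [lt_div_iff₀ hX]
      nlinarith
    · show (1 - 2 * q.1 / h) / (1 - 2 * q.2 / h) < 1
      rw [div_lt_one hX]
      nlinarith
    · simp only [mul_div_cancel₀ _ hX.ne']
      ext
      · show h / 2 * (1 - (1 - 2 * q.1 / h)) = q.1
        linarith
      · show h / 2 * (1 - (1 - 2 * q.2 / h)) = q.2
        linarith

lemma reduce (h : ℝ) (hh : 0 < h) (w : EuclideanSpace ℝ (Fin 2) → ℝ) (hw : ContDiff ℝ 1 w) :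
    ∫ x in {x : EuclideanSpace ℝ (Fin 2) | 0 < x 1 ∧ x 1 < x 0 ∧ x 0 < h}, ‖gradient w x‖ ^ 2 =
      EE (AA h w) + EE (BB h w) := by
  rw [to_prod]
  set g : ℝ × ℝ → ℝ := fun q => ‖gradient w !₂[q.1, q.2]‖ ^ 2 with hg
  have hgc : Continuous g := by
    have e : g = fun q : ℝ × ℝ => (fderiv ℝ w !₂[q.1, q.2] !₂[1, 0]) ^ 2 +
        (fderiv ℝ w !₂[q.1, q.2] !₂[0, 1]) ^ 2 := by
      ext q; simp only [hg, grad_sq]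
    rw [e]
    have c1 := hw.continuous_fderiv (by norm_num)
    have c2 : Continuous (fun q : ℝ × ℝ => (!₂[q.1, q.2] : EuclideanSpace ℝ (Fin 2))) :=
      (mk2_contDiff (n := 1) _ _ (by fun_prop) (by fun_prop)).continuous
    have c3 := c1.comp c2
    have c4 : Continuous fun q : ℝ × ℝ => fderiv ℝ w !₂[q.1, q.2] := c3
    fun_prop
  set Ω : Set (ℝ × ℝ) := {q : ℝ × ℝ | 0 < q.2 ∧ q.2 < q.1 ∧ q.1 < h} with hΩ
  have hint : IntegrableOn g Ω := by
    apply (hgc.continuousOn.integrableOn_compact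
      (isCompact_Icc (a := ((0, 0) : ℝ × ℝ)) (b := (h, h)))).mono_set
    rintro q ⟨h1, h2, h3⟩
    exact ⟨⟨by show (0:ℝ) ≤ q.1; linarith, h1.le⟩, ⟨h3.le, by show q.2 ≤ h; linarith⟩⟩
  have hm : MeasurableSet {q : ℝ × ℝ | q.1 + q.2 < h} :=
    measurableSet_lt (by fun_prop) (by fun_prop)
  have hsplit := integral_inter_add_sdiff hm hint
  have hdiff : Ω \ {q : ℝ × ℝ | q.1 + q.2 < h} = Ω ∩ {q | h ≤ q.1 + q.2} := by
    ext q; simp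
  rw [hdiff, hΩ, ← imgA h hh, ← imgB h hh, mapA h hh, mapB h hh] at hsplit
  rw [← hΩ] at hsplit
  rw [show ∫ q in Ω, ‖gradient w !₂[q.1, q.2]‖ ^ 2 = ∫ q in Ω, g q from rfl, ← hsplit, add_comm]
  unfold EE
  simp only [AA_grad h w hw, BB_grad h w hw]
  rfl

lemma EE_split (A B : ℝ × ℝ → ℝ) (hA : ContDiff ℝ 1 A) (hB : ContDiff ℝ 1 B) :
    EE A + EE B = 2 * EE (fun p => (A p - B p) / 2) + 2 * EE (fun p => (A p + B p) / 2) := by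
  have ho : ContDiff ℝ 1 (fun p => (A p - B p) / 2) := by fun_prop
  have he : ContDiff ℝ 1 (fun p => (A p + B p) / 2) := by fun_prop
  unfold EE
  rw [← integral_const_mul, ← integral_const_mul, ← integral_add (EE_integrable A hA)
    (EE_integrable B hB), ← integral_add ((EE_integrable _ ho).const_mul 2)
    ((EE_integrable _ he).const_mul 2)]
  congr 1
  ext p
  have dA := fun q => (hA.differentiable (by norm_num) q).hasFDerivAt
  have dB := fun q => (hB.differentiable (by norm_num) q).hasFDerivAt
  have e1 : ∀ q v, fderiv ℝ (fun p => (A p - B p) / 2) q v =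
      (fderiv ℝ A q v - fderiv ℝ B q v) / 2 := by
    intro q v
    have := (((dA q).sub (dB q)).mul_const (2:ℝ)⁻¹).fderiv
    have h2 : (fun p => (A p - B p) / 2) = fun p => (A p - B p) * (2:ℝ)⁻¹ := by
      ext; rw [div_eq_mul_inv]
    rw [h2]
    refine (congrArg (fun L : ℝ × ℝ →L[ℝ] ℝ => L v) this).trans ?_
    simp; ring
  have e2 : ∀ q v, fderiv ℝ (fun p => (A p + B p) / 2) q v =
      (fderiv ℝ A q v + fderiv ℝ B q v) / 2 := by
    intro q v
    have := (((dA q).add (dB q)).mul_const (2:ℝ)⁻¹).fderiv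
    have h2 : (fun p => (A p + B p) / 2) = fun p => (A p + B p) * (2:ℝ)⁻¹ := by
      ext; rw [div_eq_mul_inv]
    rw [h2]
    refine (congrArg (fun L : ℝ × ℝ →L[ℝ] ℝ => L v) this).trans ?_
    simp; ring
  simp only [e1, e2]
  ring

lemma legA (h : ℝ) (hh : 0 < h) (w : EuclideanSpace ℝ (Fin 2) → ℝ) (k : ℝ → ℝ) :
    ∫ t in (0:ℝ)..h, k (w !₂[h, t]) = h / 2 * ∫ t in (-1:ℝ)..1, k (AA h w (1, t)) := by
  have := intervalIntegral.mul_integral_comp_mul_add (a := -1) (b := 1)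
    (f := fun t => k (w !₂[h, t])) (h / 2) (h / 2)
  rw [show h / 2 * -1 + h / 2 = 0 by ring, show h / 2 * 1 + h / 2 = h by ring] at this
  rw [← this]
  congr 2
  ext t
  simp only [AA]
  rw [show h / 2 * (1 + t) = h / 2 * t + h / 2 by ring, show h / 2 * (1 + (1:ℝ)) = h by ring]

lemma legB (h : ℝ) (hh : 0 < h) (w : EuclideanSpace ℝ (Fin 2) → ℝ) (k : ℝ → ℝ) :
    ∫ s in (0:ℝ)..h, k (w !₂[s, 0]) = h / 2 * ∫ t in (-1:ℝ)..1, k (BB h w (1, t)) := by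
  have := intervalIntegral.mul_integral_comp_sub_mul (a := -1) (b := 1)
    (f := fun t => k (w !₂[t, 0])) (h / 2) (h / 2)
  rw [show h / 2 - h / 2 * -1 = h by ring, show h / 2 - h / 2 * 1 = 0 by ring] at this
  rw [← this]
  congr 2
  ext t
  simp only [BB]
  rw [show h / 2 * (1 - t) = h / 2 - h / 2 * t by ring, show h / 2 * (1 - (1:ℝ)) = 0 by ring]

lemma EE_neg (f : ℝ × ℝ → ℝ) : EE (fun p => -f p) = EE f := by
  unfold EE
  have : ∀ q, fderiv ℝ (fun p => -f p) q = -fderiv ℝ f q := fun q => fderiv_fun_neg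
  simp [this]


/-- The sharp constant `C₂(Ω,Γ)` in `‖w‖_{L²(Γ)} ≤ C₂ ‖∇w‖_{L²(Ω)}` for functions
with zero mean trace on `Γ`, where `Ω = {0 < x₂ < x₁ < h}` is an isosceles right
triangle and `Γ` is the union of the two legs, equals `((2z₀/h)·tanh z₀)^(-1/2)`,
where `z₀` is the unique root of `tanh z · tan z = 1` in `(0, π/2)`
(`z₀ ≈ 0.93755`). -/
theorem triangle_two_legs_C2 (h : ℝ) (hh : 0 < h) (z₀ : ℝ)
    (hz₀ : z₀ ∈ Set.Ioo 0 (π / 2) ∧ Real.tanh z₀ * Real.tan z₀ = 1)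
    (huniq : ∀ z ∈ Set.Ioo (0:ℝ) (π / 2), Real.tanh z * Real.tan z = 1 → z = z₀) :
    IsLeast {C : ℝ |
      ∀ w : EuclideanSpace ℝ (Fin 2) → ℝ, ContDiff ℝ 1 w →
        ((∫ t in (0:ℝ)..h, w !₂[h, t]) + (∫ s in (0:ℝ)..h, w !₂[s, 0])) = 0 →
        Real.sqrt ((∫ t in (0:ℝ)..h, (w !₂[h, t]) ^ 2) +
            (∫ s in (0:ℝ)..h, (w !₂[s, 0]) ^ 2)) ≤
          C * Real.sqrt (∫ x in {x : EuclideanSpace ℝ (Fin 2) |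
            0 < x 1 ∧ x 1 < x 0 ∧ x 0 < h}, ‖gradient w x‖ ^ 2)}
      (1 / Real.sqrt (2 * z₀ / h * Real.tanh z₀)) := by
  obtain ⟨⟨hz0, hz1⟩, hz⟩ := hz₀
  obtain ⟨he, hnum⟩ := tan_facts z₀ hz0 hz1 hz
  have htp : 0 < tanh z₀ := by
    rw [tanh_eq_sinh_div_cosh]
    exact div_pos (sinh_pos_iff.2 hz0) (cosh_pos z₀)
  have hκ : 0 < 2 * z₀ / h * tanh z₀ := by positivity
  have hsκ := Real.sqrt_pos.2 hκ
  constructor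
  · intro w hw hmean
    rw [reduce h hh w hw]
    have l1 := legA h hh w (fun x => x)
    have l2 := legB h hh w (fun x => x)
    have l3 := legA h hh w (fun x => x ^ 2)
    have l4 := legB h hh w (fun x => x ^ 2)
    rw [l1, l2] at hmean
    rw [l3, l4]
    have hA := AA_contDiff h w hw
    have hB := BB_contDiff h w hw
    have hAc := hA.continuous
    have hBc := hB.continuous
    set A := AA h w with hAdef
    set B := BB h w with hBdef
    have iA : ∀ n : ℕ, IntervalIntegrable (fun t => A (1, t) ^ n) volume (-1) 1 := fun n => by
      apply Continuous.intervalIntegrable; fun_prop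
    have iB : ∀ n : ℕ, IntervalIntegrable (fun t => B (1, t) ^ n) volume (-1) 1 := fun n => by
      apply Continuous.intervalIntegrable; fun_prop
    have ho := odd_part z₀ hz0 hz1 he (fun p => (A p - B p) / 2) (by fun_prop) (by
      intro s
      simp only [hAdef, hBdef, AA, BB, sub_neg_eq_add]
      rw [← sub_eq_add_neg, sub_self, zero_div])
    have hev := even_part (fun p => (A p + B p) / 2) (by fun_prop) (by
      have i1 := iA 1
      have i2 := iB 1
      simp only [pow_one] at i1 i2
      rw [intervalIntegral.integral_div, intervalIntegral.integral_add i1 i2]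
      have : h / 2 * ((∫ t in (-1:ℝ)..1, A (1, t)) + ∫ t in (-1:ℝ)..1, B (1, t)) = 0 := by
        linarith
      rcases mul_eq_zero.1 this with h' | h'
      · linarith
      · rw [h', zero_div])
    have hsp := EE_split A B hA hB
    have hN : (∫ t in (-1:ℝ)..1, A (1, t) ^ 2) + ∫ t in (-1:ℝ)..1, B (1, t) ^ 2 =
        2 * (∫ t in (-1:ℝ)..1, ((A (1, t) - B (1, t)) / 2) ^ 2) +
        2 * ∫ t in (-1:ℝ)..1, ((A (1, t) + B (1, t)) / 2) ^ 2 := by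
      rw [← intervalIntegral.integral_add (iA 2) (iB 2), ← intervalIntegral.integral_const_mul,
        ← intervalIntegral.integral_const_mul, ← intervalIntegral.integral_add
          (by apply Continuous.intervalIntegrable; fun_prop)
          (by apply Continuous.intervalIntegrable; fun_prop)]
      congr 1; ext t; ring
    have hev0 : 0 ≤ EE (fun p => (A p + B p) / 2) := by
      have : 0 ≤ ∫ t in (-1:ℝ)..1, ((A (1, t) + B (1, t)) / 2) ^ 2 :=
        intervalIntegral.integral_nonneg (by norm_num) (fun t _ => sq_nonneg _)
      norm_num at hev
      linarith
    have hzt : 0 < z₀ * tanh z₀ := by positivity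
    have hev2 : z₀ * tanh z₀ * (∫ t in (-1:ℝ)..1, ((A (1, t) + B (1, t)) / 2) ^ 2) ≤
        EE (fun p => (A p + B p) / 2) := by
      calc _ ≤ z₀ * tanh z₀ * (1.265 * EE (fun p => (A p + B p) / 2)) :=
            mul_le_mul_of_nonneg_left hev hzt.le
        _ = (z₀ * tanh z₀ * 1.265) * EE (fun p => (A p + B p) / 2) := by ring
        _ ≤ 1 * EE (fun p => (A p + B p) / 2) := mul_le_mul_of_nonneg_right hnum hev0
        _ = _ := one_mul _
    have hmain : (2 * z₀ / h * tanh z₀) * (h / 2 * (∫ t in (-1:ℝ)..1, A (1, t) ^ 2) +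
        h / 2 * ∫ t in (-1:ℝ)..1, B (1, t) ^ 2) ≤ EE A + EE B := by
      have e : (2 * z₀ / h * tanh z₀) * (h / 2 * (∫ t in (-1:ℝ)..1, A (1, t) ^ 2) +
        h / 2 * ∫ t in (-1:ℝ)..1, B (1, t) ^ 2) = z₀ * tanh z₀ *
        ((∫ t in (-1:ℝ)..1, A (1, t) ^ 2) + ∫ t in (-1:ℝ)..1, B (1, t) ^ 2) := by
        field_simp
      rw [e, hN, hsp]
      linarith
    rw [one_div_mul_eq_div, le_div_iff₀ hsκ, mul_comm, ← Real.sqrt_mul hκ.le]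
    exact Real.sqrt_le_sqrt hmain
  · intro C hC
    set w : EuclideanSpace ℝ (Fin 2) → ℝ := fun x => uu z₀ (2 * x 0 / h - 1, 2 * x 1 / h - 1)
      with hwdef
    have hw : ContDiff ℝ 1 w := by
      have := uu_contDiff z₀
      apply this.comp
      fun_prop
    have hA : AA h w = uu z₀ := by
      ext p
      simp only [AA, hwdef]
      congr 1
      ext
      · simp; field_simp; ring
      · simp; field_simp; ring
    have hB : BB h w = fun p => -uu z₀ p := by
      ext p
      have e1 : 2 * (h / 2 * (1 - p.2)) / h - 1 = -p.2 := by field_simp; ring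
      have e2 : 2 * (h / 2 * (1 - p.1)) / h - 1 = -p.1 := by field_simp; ring
      simp only [BB, hwdef]
      have : uu z₀ (-p.2, -p.1) = -uu z₀ p := by
        simp only [uu, mul_neg, sin_neg, cosh_neg]; ring
      rw [← this, ← e1, ← e2]
      rfl
    have l1 := legA h hh w (fun x => x)
    have l2 := legB h hh w (fun x => x)
    have l3 := legA h hh w (fun x => x ^ 2)
    have l4 := legB h hh w (fun x => x ^ 2)
    simp only [hA, hB] at l1 l2 l3 l4
    have hm : ((∫ t in (0:ℝ)..h, w !₂[h, t]) + (∫ s in (0:ℝ)..h, w !₂[s, 0])) = 0 := by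
      rw [l1, l2, intervalIntegral.integral_neg]; ring
    have hc := hC w hw hm
    rw [reduce h hh w hw, hA, hB, EE_neg, green_uu z₀ he, l3, l4] at hc
    simp only [neg_sq] at hc
    have hucont := (uu_contDiff z₀).continuous
    have hI : 0 < ∫ t in (-1:ℝ)..1, uu z₀ (1, t) ^ 2 := by
      apply intervalIntegral.intervalIntegral_pos_of_pos_on
      · apply Continuous.intervalIntegrable; fun_prop
      · intro t ht
        have := uu_pos z₀ hz0 hz1 he t ht.1 ht.2.le
        positivity
      · norm_num
    set I := ∫ t in (-1:ℝ)..1, uu z₀ (1, t) ^ 2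
    have e : z₀ * tanh z₀ * I + z₀ * tanh z₀ * I =
        (2 * z₀ / h * tanh z₀) * (h / 2 * I + h / 2 * I) := by field_simp
    rw [e, Real.sqrt_mul hκ.le, ← mul_assoc] at hc
    have hs : 0 < √(h / 2 * I + h / 2 * I) := Real.sqrt_pos.2 (by positivity)
    rw [div_le_iff₀ hsκ]
    by_contra hlt
    push Not at hlt
    nlinarith
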